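/- arXiv:1810.02839 — 2 statements merged into one kernel-verified Lean document; each statement's English description precedes it below -/
import Mathlib

section
/- Let S be a finite set of n points in the plane in general position that is not in convex position. Then every edge-labeled tree in ℒ(S) can be transformed into any other edge-labeled tree in ℒ(S) by a sequence of at most 3 simultaneous exchanges (with labels transferred along each exchange). -/
open scoped Classical

noncomputable section

/-- Points in the plane. -/
abbrev Pt : Type := ℝ × ℝ

/-- The closed straight-line segment spanned by an (unordered) edge. -/
def segOf (e : Sym2 Pt) : Set Pt :=
  Sym2.lift ⟨fun p q => segment ℝ p q, fun p q => segment_symm ℝ p q⟩ e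

/-- The set of endpoints of an edge. -/
def epts (e : Sym2 Pt) : Set Pt := {p | p ∈ e}

/-- Two edges intersect in at most common endpoints (they do not cross). -/
def NoCrossPair (e f : Sym2 Pt) : Prop := segOf e ∩ segOf f ⊆ epts e ∩ epts f

/-- A set of edges is noncrossing: any two distinct edges meet in at most a common endpoint. -/
def NoCross (E : Finset (Sym2 Pt)) : Prop := ∀ e ∈ E, ∀ f ∈ E, e ≠ f → NoCrossPair e f

/-- `E` is the edge set of a noncrossing straight-line spanning tree on the point set `S`:
all edges are nondegenerate with endpoints in `S`, pairwise noncrossing, there are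
`|S| - 1` of them, and they connect all of `S`. -/
def IsPST (S : Finset Pt) (E : Finset (Sym2 Pt)) : Prop :=
  (∀ e ∈ E, ¬ e.IsDiag ∧ ∀ p ∈ e, p ∈ S) ∧
  NoCross E ∧ E.card + 1 = S.card ∧
  ∀ p ∈ S, ∀ q ∈ S, Relation.ReflTransGen (fun a b => s(a, b) ∈ E) p q

/-- `S` is in general position: no three of its points are collinear. -/
def GenPos (S : Finset Pt) : Prop :=
  ∀ p ∈ S, ∀ q ∈ S, ∀ r ∈ S, p ≠ q → p ≠ r → q ≠ r → ¬ Collinear ℝ ({p, q, r} : Set Pt)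

/-- `S` is in convex position: every point of `S` is a vertex of the convex hull of `S`. -/
def ConvexPos (S : Finset Pt) : Prop :=
  ∀ p ∈ S, p ∉ convexHull ℝ ((S : Set Pt) \ {p})

/-- The open interior of the triangle with vertices `p`, `q`, `r`. -/
def triInt (p q r : Pt) : Set Pt := interior (convexHull ℝ ({p, q, r} : Set Pt))

/-- `y` can be reached from `x` by a sequence of at most `m` `step`-operations. -/
def ReachesIn {α : Type*} (step : α → α → Prop) (m : ℕ) (x y : α) : Prop :=
  ∃ k ≤ m, ∃ f : ℕ → α, f 0 = x ∧ f k = y ∧ ∀ i < k, step (f i) (f (i + 1))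

/-- A simultaneous rotation from `E₁` to `E₂`: a bijection `π` between the removed and the
inserted edges such that each `e` shares an endpoint with `π e` and `π e` crosses no edge
of `E₁`. -/
def SimRotation (S : Finset Pt) (E₁ E₂ : Finset (Sym2 Pt)) : Prop :=
  IsPST S E₁ ∧ IsPST S E₂ ∧ ∃ π : Sym2 Pt → Sym2 Pt,
    Set.BijOn π ↑(E₁ \ E₂) ↑(E₂ \ E₁) ∧
    ∀ e ∈ E₁ \ E₂, (∃ p, p ∈ e ∧ p ∈ π e) ∧ ∀ f ∈ E₁, NoCrossPair (π e) f

/-- An empty-triangle rotation replaces an edge `pq` by an adjacent edge `pr` such that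
no edge of either tree meets the interior of the triangle `pqr`. -/
def EmptyTriRot (S : Finset Pt) (E₁ E₂ : Finset (Sym2 Pt)) : Prop :=
  IsPST S E₁ ∧ IsPST S E₂ ∧ ∃ p q r : Pt,
    E₁ \ E₂ = {s(p, q)} ∧ E₂ \ E₁ = {s(p, r)} ∧
    ∀ g ∈ E₁ ∪ E₂, Disjoint (segOf g) (triInt p q r)

/-- A simultaneous empty-triangle rotation. -/
def SimEmptyTriRot (S : Finset Pt) (E₁ E₂ : Finset (Sym2 Pt)) : Prop :=
  IsPST S E₁ ∧ IsPST S E₂ ∧ ∃ π : Sym2 Pt → Sym2 Pt,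
    Set.BijOn π ↑(E₁ \ E₂) ↑(E₂ \ E₁) ∧
    ∀ e ∈ E₁ \ E₂, ∃ p q r : Pt, e = s(p, q) ∧ π e = s(p, r) ∧
      ∀ g ∈ E₁ ∪ E₂, Disjoint (segOf g) (triInt p q r)

/-- An edge slide replaces `pq` by `pr`, where `qr` is an edge of both trees and no edge of
either tree meets the interior of the triangle `pqr`. -/
def EdgeSlide (S : Finset Pt) (E₁ E₂ : Finset (Sym2 Pt)) : Prop :=
  IsPST S E₁ ∧ IsPST S E₂ ∧ ∃ p q r : Pt,
    E₁ \ E₂ = {s(p, q)} ∧ E₂ \ E₁ = {s(p, r)} ∧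
    s(q, r) ∈ E₁ ∧ s(q, r) ∈ E₂ ∧
    ∀ g ∈ E₁ ∪ E₂, Disjoint (segOf g) (triInt p q r)

/-- A simultaneous edge slide. -/
def SimEdgeSlide (S : Finset Pt) (E₁ E₂ : Finset (Sym2 Pt)) : Prop :=
  IsPST S E₁ ∧ IsPST S E₂ ∧ ∃ π : Sym2 Pt → Sym2 Pt,
    Set.BijOn π ↑(E₁ \ E₂) ↑(E₂ \ E₁) ∧
    ∀ e ∈ E₁ \ E₂, ∃ p q r : Pt, e = s(p, q) ∧ π e = s(p, r) ∧
      s(q, r) ∈ E₁ ∧ s(q, r) ∈ E₂ ∧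
      ∀ g ∈ E₁ ∪ E₂, Disjoint (segOf g) (triInt p q r)

/-- `e` is an edge of the convex hull of `S`: it joins two distinct points of `S` and its
segment lies on the boundary of the convex hull of `S`. -/
def IsHullEdge (S : Finset Pt) (e : Sym2 Pt) : Prop :=
  ∃ u v : Pt, e = s(u, v) ∧ u ∈ S ∧ v ∈ S ∧ u ≠ v ∧
    segment ℝ u v ⊆ frontier (convexHull ℝ (S : Set Pt))

/-- The spanning star centered at `v`. -/
def starAt (S : Finset Pt) (v : Pt) : Finset (Sym2 Pt) := (S.erase v).image (fun w => s(v, w))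

/-- An edge-labeled tree: an edge set together with a labeling function. -/
abbrev LTree := Finset (Sym2 Pt) × (Sym2 Pt → ℕ)

/-- `T` is an edge-labeled noncrossing straight-line spanning tree on `S`: its edge set is in
`𝒯(S)` and its labeling is a bijection from the edges onto `{1, …, |S| - 1}`
(normalized to `0` on non-edges). -/
def IsLabeledPST (S : Finset Pt) (T : LTree) : Prop :=
  IsPST S T.1 ∧ Set.BijOn T.2 ↑T.1 (Set.Icc 1 (S.card - 1)) ∧ ∀ e, e ∉ T.1 → T.2 e = 0

/-- A simultaneous exchange on edge-labeled trees: an arbitrary bijection between removed and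
inserted edges transferring labels, all common edges keeping their labels. -/
def LabSimExchange (S : Finset Pt) (T₁ T₂ : LTree) : Prop :=
  IsLabeledPST S T₁ ∧ IsLabeledPST S T₂ ∧ ∃ π : Sym2 Pt → Sym2 Pt,
    Set.BijOn π ↑(T₁.1 \ T₂.1) ↑(T₂.1 \ T₁.1) ∧
    (∀ e ∈ T₁.1 \ T₂.1, T₂.2 (π e) = T₁.2 e) ∧
    ∀ e ∈ T₁.1 ∩ T₂.1, T₂.2 e = T₁.2 e

/-- A rotation on edge-labeled trees: the removed and inserted edges share an endpoint and do
not cross, the label of the removed edge is transferred, and all other labels are kept. -/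
def LabRotation (S : Finset Pt) (T₁ T₂ : LTree) : Prop :=
  IsLabeledPST S T₁ ∧ IsLabeledPST S T₂ ∧ ∃ e₁ e₂ : Sym2 Pt,
    T₁.1 \ T₂.1 = {e₁} ∧ T₂.1 \ T₁.1 = {e₂} ∧
    (∃ p, p ∈ e₁ ∧ p ∈ e₂) ∧ NoCrossPair e₁ e₂ ∧
    T₂.2 e₂ = T₁.2 e₁ ∧ ∀ e ∈ T₁.1 ∩ T₂.1, T₂.2 e = T₁.2 e

/-- An edge slide on edge-labeled trees, transferring the label of the slid edge. -/
def LabEdgeSlide (S : Finset Pt) (T₁ T₂ : LTree) : Prop :=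
  IsLabeledPST S T₁ ∧ IsLabeledPST S T₂ ∧ ∃ p q r : Pt,
    T₁.1 \ T₂.1 = {s(p, q)} ∧ T₂.1 \ T₁.1 = {s(p, r)} ∧
    s(q, r) ∈ T₁.1 ∧ s(q, r) ∈ T₂.1 ∧
    (∀ g ∈ T₁.1 ∪ T₂.1, Disjoint (segOf g) (triInt p q r)) ∧
    T₂.2 (s(p, r)) = T₁.2 (s(p, q)) ∧ ∀ e ∈ T₁.1 ∩ T₂.1, T₂.2 e = T₁.2 e

lemma lse_of (S : Finset Pt) (T₁ T₂ : LTree) (h₁ : IsLabeledPST S T₁) (h₂ : IsLabeledPST S T₂)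
    (h : ∀ e ∈ T₁.1 ∩ T₂.1, T₂.2 e = T₁.2 e) : LabSimExchange S T₁ T₂ := by
  have b₁ := h₁.2.1
  have b₂ := h₂.2.1
  have key : ∀ e ∈ T₁.1, ∃ f ∈ T₂.1, T₂.2 f = T₁.2 e := fun e he => by
    obtain ⟨f, hf, hfe⟩ := b₂.surjOn (b₁.mapsTo he)
    exact ⟨f, hf, hfe⟩
  have key2 : ∀ f ∈ T₂.1, ∃ e ∈ T₁.1, T₁.2 e = T₂.2 f := fun e he => by
    obtain ⟨f, hf, hfe⟩ := b₁.surjOn (b₂.mapsTo he)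
    exact ⟨f, hf, hfe⟩
  choose! g hg hgl using key
  have i₁ : ∀ e ∈ T₁.1, ∀ f ∈ T₁.1, T₁.2 e = T₁.2 f → e = f := fun e he f hf h => b₁.injOn he hf h
  have i₂ : ∀ e ∈ T₂.1, ∀ f ∈ T₂.1, T₂.2 e = T₂.2 f → e = f := fun e he f hf h => b₂.injOn he hf h
  simp only [Finset.mem_inter] at h
  refine ⟨h₁, h₂, g, ⟨?_, ?_, ?_⟩, ?_, by simpa using h⟩
  · intro e he
    simp only [Finset.coe_sdiff, Set.mem_sdiff, Finset.mem_coe] at he ⊢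
    refine ⟨hg e he.1, fun hh => he.2 ?_⟩
    have := i₁ _ hh e he.1 ((h _ ⟨hh, hg e he.1⟩).symm.trans (hgl e he.1))
    rw [← this]; exact hg e he.1
  · intro e he f hf hef
    simp only [Finset.coe_sdiff, Set.mem_sdiff, Finset.mem_coe] at he hf
    exact i₁ _ he.1 _ hf.1 (by rw [← hgl e he.1, ← hgl f hf.1, hef])
  · intro f hf
    simp only [Finset.coe_sdiff, Set.mem_sdiff, Finset.mem_coe] at hf
    obtain ⟨e, he, hef⟩ := key2 f hf.1
    have hgf : g e = f := i₂ _ (hg e he) _ hf.1 ((hgl e he).trans hef)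
    refine ⟨e, ?_, hgf⟩
    simp only [Finset.coe_sdiff, Set.mem_sdiff, Finset.mem_coe]
    refine ⟨he, fun hh => hf.2 ?_⟩
    have := i₂ e hh f hf.1 ((h e ⟨he, hh⟩).trans hef)
    rwa [← this]
  · intro e he
    exact hgl e (Finset.mem_sdiff.1 he).1

lemma exists_label (S : Finset Pt) (T : LTree) (h : IsLabeledPST S T) (A : Finset (Sym2 Pt))
    (hA : IsPST S A) : ∃ L : Sym2 Pt → ℕ, IsLabeledPST S (A, L) ∧ ∀ e ∈ A, e ∈ T.1 → L e = T.2 e := by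
  have hc : A.card = T.1.card := by
    have h1 := h.1.2.2.1
    have h2 := hA.2.2.1
    omega
  have hne : Nonempty (Sym2 Pt) := ⟨s(0, 0)⟩
  obtain ⟨g, hg⟩ := Set.Finite.exists_bijOn_of_encard_eq (s := ((A \ T.1 : Finset _) : Set (Sym2 Pt)))
    (t := ((T.1 \ A : Finset _) : Set (Sym2 Pt))) (Finset.finite_toSet _) (by
      rw [Set.encard_coe_eq_coe_finsetCard, Set.encard_coe_eq_coe_finsetCard,
        Finset.card_sdiff_comm hc])
  set k : Sym2 Pt → Sym2 Pt := fun e => if e ∈ T.1 then e else g e with hk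
  have hkb : Set.BijOn k ↑A ↑T.1 := by
    have m : ∀ e ∈ A, e ∉ T.1 → g e ∈ T.1 ∧ g e ∉ A := fun e h1 h2 => by
      have := hg.mapsTo (x := e) (by simp [h1, h2])
      simpa using this
    refine ⟨?_, ?_, ?_⟩
    · intro e he
      by_cases h1 : e ∈ T.1
      · simp [hk, h1]
      · simpa [hk, h1] using (m e he h1).1
    · intro e he f hf hef
      by_cases h1 : e ∈ T.1 <;> by_cases h2 : f ∈ T.1
      · simpa [hk, h1, h2] using hef
      · simp only [hk, h1, h2, if_true, if_false] at hef
        exact absurd (hef ▸ he) (m f hf h2).2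
      · simp only [hk, h1, h2, if_true, if_false] at hef
        exact absurd (hef ▸ hf) (m e he h1).2
      · simp only [hk, h1, h2, if_false] at hef
        exact hg.injOn (by simpa [h1] using he) (by simpa [h2] using hf) hef
    · intro f hf
      by_cases h1 : f ∈ A
      · exact ⟨f, h1, by simp only [hk]; exact if_pos hf⟩
      · obtain ⟨e, he, hef⟩ := hg.surjOn (a := f) (by simpa [h1] using hf)
        have he' : e ∈ A ∧ e ∉ T.1 := by simpa using he
        exact ⟨e, he'.1, by simp only [hk]; rw [if_neg he'.2, hef]⟩
  refine ⟨fun e => if e ∈ A then T.2 (k e) else 0, ⟨hA, ?_, ?_⟩, ?_⟩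
  · refine (h.2.1.comp hkb).congr ?_
    intro e he
    have : e ∈ A := he
    simp [this]
  · intro e he
    have : e ∉ A := he
    simp [this]
  · intro e he heT
    simp [he, heT, hk]

lemma finish (S : Finset Pt) (h : ∃ A B, IsPST S A ∧ IsPST S B ∧ Disjoint A B)
    (T T' : LTree) (hT : IsLabeledPST S T) (hT' : IsLabeledPST S T') :
    ReachesIn (LabSimExchange S) 3 T T' := by
  obtain ⟨A, B, hA, hB, hAB⟩ := h
  obtain ⟨L, hL, hLT⟩ := exists_label S T hT A hA
  obtain ⟨M, hM, hMT⟩ := exists_label S T' hT' B hB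
  refine ⟨3, le_rfl, fun i => match i with | 0 => T | 1 => (A, L) | 2 => (B, M) | _ => T', rfl, rfl, ?_⟩
  intro i hi
  interval_cases i
  · exact lse_of S _ _ hT hL fun e he => hLT e (Finset.mem_inter.1 he).2 (Finset.mem_inter.1 he).1
  · refine lse_of S _ _ hL hM fun e he => ?_
    exact absurd (Finset.mem_inter.1 he).2 (Finset.disjoint_left.1 hAB (Finset.mem_inter.1 he).1)
  · exact lse_of S _ _ hM hT' fun e he =>
      (hMT e (Finset.mem_inter.1 he).1 (Finset.mem_inter.1 he).2).symm

def cr (a b c : Pt) : ℝ := (b.1 - a.1) * (c.2 - a.2) - (b.2 - a.2) * (c.1 - a.1)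

lemma collinear_of_cr {a b c : Pt} (hab : a ≠ b) (h : cr a b c = 0) :
    Collinear ℝ ({a, b, c} : Set Pt) := by
  rw [collinear_iff_of_mem (p₀ := a) (by simp)]
  refine ⟨b - a, ?_⟩
  unfold cr at h
  intro p hp
  simp only [Set.mem_insert_iff, Set.mem_singleton_iff] at hp
  rcases hp with rfl | rfl | rfl
  · exact ⟨0, by simp⟩
  · exact ⟨1, by simp⟩
  · by_cases h1 : b.1 - a.1 = 0
    · have h2 : b.2 - a.2 ≠ 0 := fun h2 => hab (Prod.ext (by linarith) (by linarith))
      refine ⟨(p.2 - a.2) / (b.2 - a.2), Prod.ext ?_ ?_⟩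
      · have : p.1 - a.1 = 0 := by
          rw [h1] at h
          have h3 : (b.2 - a.2) * (p.1 - a.1) = 0 := by linarith
          exact (mul_eq_zero.1 h3).resolve_left h2
        simp [h1]; linarith
      · simp; field_simp; ring
    · refine ⟨(p.1 - a.1) / (b.1 - a.1), Prod.ext ?_ ?_⟩
      · simp; field_simp; ring
      · simp; field_simp; linarith

lemma GenPos.cr_ne {S : Finset Pt} (h : GenPos S) {a b c : Pt} (ha : a ∈ S) (hb : b ∈ S)
    (hc : c ∈ S) (h1 : a ≠ b) (h2 : a ≠ c) (h3 : b ≠ c) : cr a b c ≠ 0 :=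
  fun h0 => h a ha b hb c hc h1 h2 h3 (collinear_of_cr h1 h0)

lemma mem_tri {q r s x : Pt} (h : x ∈ convexHull ℝ ({q, r, s} : Set Pt)) :
    ∃ a b c : ℝ, 0 ≤ a ∧ 0 ≤ b ∧ 0 ≤ c ∧ a + b + c = 1 ∧ x = a • q + b • r + c • s := by
  rw [convexHull_insert (by simp), convexHull_pair] at h
  simp only [convexJoin_singleton_left, Set.mem_iUnion] at h
  obtain ⟨y, ⟨a, b, ha, hb, hab, rfl⟩, ⟨c, d, hc, hd, hcd, rfl⟩⟩ := h
  refine ⟨c, d * a, d * b, hc, by positivity, by positivity, ?_, ?_⟩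
  · rw [add_assoc, ← mul_add, hab, mul_one, hcd]
  · simp only [smul_add, mul_smul, add_assoc]

lemma tri_mem {q r s x : Pt} {a b c : ℝ} (ha : 0 ≤ a) (hb : 0 ≤ b) (hc : 0 ≤ c)
    (h : a + b + c = 1) (hx : x = a • q + b • r + c • s) :
    x ∈ convexHull ℝ ({q, r, s} : Set Pt) := by
  have hC := convex_convexHull ℝ ({q, r, s} : Set Pt)
  rw [hx]
  exact hC.sum_mem (t := Finset.univ) (w := ![a, b, c]) (z := ![q, r, s])
    (by intro i _; fin_cases i <;> simpa) (by simp [Fin.sum_univ_three, h])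
    (by intro i _; fin_cases i <;> exact subset_convexHull ℝ _ (by simp)) |> fun h => by
      simpa [Fin.sum_univ_three] using h

lemma km (S : Finset Pt) (N : Set Pt) (hN : N.Finite)
    (h : ∀ v ∈ S, v ∉ convexHull ℝ ((S : Set Pt) \ {v}) → v ∈ N) :
    (S : Set Pt) ⊆ convexHull ℝ N := by
  have hc : IsCompact (convexHull ℝ (S : Set Pt)) := S.finite_toSet.isCompact_convexHull ℝ
  have := closure_convexHull_extremePoints hc (convex_convexHull ℝ _)
  refine (subset_convexHull ℝ _).trans ?_
  rw [← this]
  refine closure_minimal (convexHull_mono ?_) (hN.isClosed_convexHull ℝ)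
  intro v hv
  refine h v (extremePoints_convexHull_subset hv) fun hv' => ?_
  rw [(convex_convexHull ℝ _).mem_extremePoints_iff_mem_sdiff_convexHull_sdiff] at hv
  exact hv.2 (convexHull_mono (Set.sdiff_subset_sdiff_left (subset_convexHull ℝ _)) hv')

lemma visible {S : Finset Pt} {v : Pt} (hS : S.Nonempty) (hg : GenPos (insert v S))
    (hv : v ∉ convexHull ℝ (S : Set Pt)) :
    ∃ a ∈ S, ∃ b ∈ S, (∀ s ∈ S, s ≠ a → 0 < cr v a s) ∧ (∀ s ∈ S, s ≠ b → cr v b s < 0) := by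
  obtain ⟨f, u, h1, h2⟩ := geometric_hahn_banach_closed_point (convex_convexHull ℝ (S : Set Pt))
    (S.finite_toSet.isClosed_convexHull ℝ) hv
  have hlt : ∀ s ∈ S, f s < f v := fun s hs => (h1 s (subset_convexHull ℝ _ hs)).trans h2
  have hvS : v ∉ S := fun h => (hlt v h).false
  set α := f (1, 0) with hα
  set β := f (0, 1) with hβ
  have hf : ∀ x : Pt, f x = α * x.1 + β * x.2 := fun x => by
    have : x = x.1 • ((1, 0) : Pt) + x.2 • ((0, 1) : Pt) := by ext <;> simp
    conv_lhs => rw [this]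
    rw [map_add, map_smul, map_smul]; simp [hα, hβ]; ring
  set sl : Pt → ℝ := fun s => (α * (s.2 - v.2) - β * (s.1 - v.1)) / (f v - f s) with hsl
  have key : ∀ a ∈ S, ∀ s ∈ S, sl a ≤ sl s → cr v a s ≤ 0 := by
    intro a ha s hs h
    have pa := hlt a ha
    have ps := hlt s hs
    simp only [hsl] at h
    rw [div_le_div_iff₀ (by linarith) (by linarith)] at h
    rw [hf v, hf a] at pa
    rw [hf v, hf s] at ps
    rw [hf v, hf a, hf s] at h
    have hpos : 0 < α ^ 2 + β ^ 2 := by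
      by_contra hn
      have h1 : α = 0 := by nlinarith [sq_nonneg α, sq_nonneg β]
      have h2 : β = 0 := by nlinarith [sq_nonneg α, sq_nonneg β]
      rw [h1, h2] at pa; simp at pa
    have : (α ^ 2 + β ^ 2) * cr v a s ≤ 0 := by
      unfold cr; nlinarith
    by_contra hn
    push Not at hn
    have := mul_pos hpos hn
    linarith
  have anti : ∀ a s : Pt, cr v a s = - cr v s a := fun a s => by unfold cr; ring
  have ne : ∀ a ∈ S, ∀ s ∈ S, s ≠ a → cr v a s ≠ 0 := fun a ha s hs h =>
    hg.cr_ne (by simp) (by simp [ha]) (by simp [hs]) (fun h => hvS (h ▸ ha)) (fun h => hvS (h ▸ hs)) h.symm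
  obtain ⟨a, ha, ha'⟩ := S.exists_max_image sl hS
  obtain ⟨b, hb, hb'⟩ := S.exists_min_image sl hS
  refine ⟨a, ha, b, hb, fun s hs h => ?_, fun s hs h => ?_⟩
  · have := key s hs a ha (ha' s hs)
    rw [anti] at this
    exact lt_of_le_of_ne (by linarith) (ne a ha s hs h).symm
  · exact lt_of_le_of_ne (key b hb s hs (hb' s hs)) (ne b hb s hs h)

lemma NoCrossPair.symm {e f : Sym2 Pt} (h : NoCrossPair e f) : NoCrossPair f e :=
  fun _ hx => (h hx.symm).symm

lemma ncp_iff {a b c d : Pt} : NoCrossPair s(a, b) s(c, d) ↔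
    ∀ x, x ∈ segment ℝ a b → x ∈ segment ℝ c d → (x = a ∨ x = b) ∧ (x = c ∨ x = d) := by
  simp [NoCrossPair, segOf, epts, Set.subset_def]

lemma cr_comb (a b u w : Pt) (s t : ℝ) (h : s + t = 1) :
    cr a b (s • u + t • w) = s * cr a b u + t * cr a b w := by
  have : s = 1 - t := by linarith
  subst this
  unfold cr; simp; ring

lemma cr_comb3 (a b u w z : Pt) (s t r : ℝ) (h : s + t + r = 1) :
    cr a b (s • u + t • w + r • z) = s * cr a b u + t * cr a b w + r * cr a b z := by
  have : s = 1 - t - r := by linarith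
  subst this
  unfold cr; simp; ring

lemma cr_left (a b : Pt) : cr a b a = 0 := by unfold cr; ring
lemma cr_right (a b : Pt) : cr a b b = 0 := by unfold cr; ring

lemma cr_seg {a b x : Pt} (h : x ∈ segment ℝ a b) : cr a b x = 0 := by
  obtain ⟨s, t, hs, ht, hst, rfl⟩ := h
  rw [cr_comb _ _ _ _ _ _ hst, cr_left, cr_right]; ring

lemma nc_vis {S : Finset Pt} {v a : Pt} (ε : ℝ) (hp : ∀ s ∈ S, s ≠ a → 0 < ε * cr v a s)
    {u w : Pt} (hu : u ∈ S) (hw : w ∈ S) (huw : u ≠ w) : NoCrossPair s(v, a) s(u, w) := by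
  rw [ncp_iff]
  intro x hx1 hx2
  have h0 := cr_seg hx1
  obtain ⟨s, t, hs, ht, hst, rfl⟩ := hx2
  rw [cr_comb _ _ _ _ _ _ hst] at h0
  have h0' : s * (ε * cr v a u) + t * (ε * cr v a w) = 0 := by
    linear_combination ε * h0
  by_cases hua : u = a
  · have hwa : w ≠ a := fun h => huw (hua.trans h.symm)
    have h1 := hp w hw hwa
    rw [hua, cr_right] at h0'
    have ht0 : t = 0 := by
      have : t * (ε * cr v a w) = 0 := by linarith
      exact (mul_eq_zero.1 this).resolve_right h1.ne'
    have hs1 : s = 1 := by linarith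
    subst ht0 hs1 hua
    simp
  · have h1 := hp u hu hua
    by_cases hwa : w = a
    · rw [hwa, cr_right] at h0'
      have hs0 : s = 0 := by
        have : s * (ε * cr v a u) = 0 := by linarith
        exact (mul_eq_zero.1 this).resolve_right h1.ne'
      have ht1 : t = 1 := by linarith
      subst hs0 ht1 hwa
      simp
    · exfalso
      have h2 := hp w hw hwa
      rcases hs.eq_or_lt with h | h
      · have : t = 1 := by linarith
        subst h this
        linarith
      · have := mul_pos h h1
        have := mul_nonneg ht h2.le
        linarith

lemma nc_adj {a b c : Pt} (h : cr a c b ≠ 0) : NoCrossPair s(a, b) s(a, c) := by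
  rw [ncp_iff]
  intro x hx1 hx2
  have h0 := cr_seg hx2
  obtain ⟨s, t, hs, ht, hst, rfl⟩ := hx1
  rw [cr_comb _ _ _ _ _ _ hst, cr_left] at h0
  have ht0 : t = 0 := by
    have : t * cr a c b = 0 := by linarith
    exact (mul_eq_zero.1 this).resolve_right h
  have hs1 : s = 1 := by linarith
  subst ht0 hs1
  simp

lemma nc_opp {p q r s : Pt} (h : p ∈ convexHull ℝ ({q, r, s} : Set Pt)) (h0 : cr r s p ≠ 0) :
    NoCrossPair s(p, q) s(r, s) := by
  rw [ncp_iff]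
  intro x hx1 hx2
  exfalso
  obtain ⟨a, b, c, ha, hb, hc, hs, hp⟩ := mem_tri h
  have e0 := cr_seg hx2
  obtain ⟨t, u, ht, hu, htu, rfl⟩ := hx1
  rw [cr_comb _ _ _ _ _ _ htu] at e0
  have e1 : cr r s p = a * cr r s q := by
    rw [hp, cr_comb3 _ _ _ _ _ _ _ _ hs, cr_left, cr_right]; ring
  rw [e1] at e0 h0
  have hq : cr r s q ≠ 0 := right_ne_zero_of_mul h0
  have ha' : 0 < a := lt_of_le_of_ne ha (left_ne_zero_of_mul h0).symm
  have : (t * a + u) * cr r s q = 0 := by linarith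
  have := (mul_eq_zero.1 this).resolve_right hq
  rcases ht.eq_or_lt with h | h
  · subst h; linarith
  · have := mul_pos h ha'
    linarith

lemma pst_insert {S : Finset Pt} {E : Finset (Sym2 Pt)} (hE : IsPST S E) {v a : Pt} (hv : v ∉ S)
    (ha : a ∈ S) (ε : ℝ) (hp : ∀ s ∈ S, s ≠ a → 0 < ε * cr v a s) :
    IsPST (insert v S) (insert s(v, a) E) := by
  obtain ⟨h1, h2, h3, h4⟩ := hE
  have hva : v ≠ a := fun h => hv (h ▸ ha)
  have hn : s(v, a) ∉ E := fun h => hv ((h1 _ h).2 v (by simp))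
  have hnc : ∀ f ∈ E, NoCrossPair s(v, a) f := by
    intro f hf
    have := h1 f hf
    induction f with | _ u w =>
    exact nc_vis ε hp (this.2 u (by simp)) (this.2 w (by simp)) (by simpa using this.1)
  refine ⟨?_, ?_, ?_, ?_⟩
  · intro e he
    rcases Finset.mem_insert.1 he with rfl | he
    · refine ⟨by simpa using hva, ?_⟩
      intro p hp
      rcases Sym2.mem_iff.1 hp with rfl | rfl <;> simp [ha]
    · exact ⟨(h1 e he).1, fun p hp => Finset.mem_insert_of_mem ((h1 e he).2 p hp)⟩
  · intro e he f hf hef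
    rcases Finset.mem_insert.1 he with rfl | he <;> rcases Finset.mem_insert.1 hf with rfl | hf
    · exact absurd rfl hef
    · exact hnc f hf
    · exact (hnc e he).symm
    · exact h2 e he f hf hef
  · rw [Finset.card_insert_of_notMem hn, Finset.card_insert_of_notMem hv, h3]
  · have h4' : ∀ p ∈ S, ∀ q ∈ S,
        Relation.ReflTransGen (fun x y => s(x, y) ∈ insert s(v, a) E) p q := fun p hp q hq =>
      Relation.ReflTransGen.mono (fun x y h => Finset.mem_insert_of_mem h) _ _ (h4 p hp q hq)
    intro p hp q hq
    rcases Finset.mem_insert.1 hp with rfl | hp1 <;> rcases Finset.mem_insert.1 hq with rfl | hq1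
    · exact .refl
    · exact .head (by simp) (h4' a ha q hq1)
    · exact .tail (h4' p hp1 a ha) (by simp [Sym2.eq_swap])
    · exact h4' p hp1 q hq1

lemma pst_path {S : Finset Pt} (hg : GenPos S) {x y z w : Pt} (hS : S = {x, y, z, w})
    (h1 : x ≠ y) (h2 : x ≠ z) (h3 : x ≠ w) (h4 : y ≠ z) (h5 : y ≠ w) (h6 : z ≠ w)
    (ho : NoCrossPair s(x, y) s(z, w)) : IsPST S {s(x, y), s(y, z), s(z, w)} := by
  have hx : x ∈ S := by simp [hS]
  have hy : y ∈ S := by simp [hS]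
  have hz : z ∈ S := by simp [hS]
  have hw : w ∈ S := by simp [hS]
  have a1 : NoCrossPair s(x, y) s(y, z) := by
    rw [Sym2.eq_swap]
    exact nc_adj (hg.cr_ne hy hz hx h4 h1.symm h2.symm)
  have a2 : NoCrossPair s(y, z) s(z, w) := by
    rw [Sym2.eq_swap]
    exact nc_adj (hg.cr_ne hz hw hy h6 h4.symm h5.symm)
  refine ⟨?_, ?_, ?_, ?_⟩
  · intro e he
    simp only [Finset.mem_insert, Finset.mem_singleton] at he
    rcases he with rfl | rfl | rfl <;> refine ⟨by simpa, ?_⟩ <;> intro p hp <;>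
      rcases Sym2.mem_iff.1 hp with rfl | rfl <;> assumption
  · intro e he f hf hef
    simp only [Finset.mem_insert, Finset.mem_singleton] at he hf
    rcases he with rfl | rfl | rfl <;> rcases hf with rfl | rfl | rfl <;>
      first | exact absurd rfl hef | assumption | (apply NoCrossPair.symm; assumption)
  · rw [hS, Finset.card_insert_of_notMem, Finset.card_insert_of_notMem,
      Finset.card_insert_of_notMem, Finset.card_insert_of_notMem, Finset.card_insert_of_notMem] <;>
      simp [*, Ne.symm] 
  · set R : Pt → Pt → Prop := fun a b => s(a, b) ∈ ({s(x, y), s(y, z), s(z, w)} : Finset (Sym2 Pt))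
      with hR
    have hsym : ∀ a b, R a b → R b a := fun a b h => by
      simp only [hR] at h ⊢; rwa [Sym2.eq_swap (a := b) (b := a)]
    have hfrom : ∀ q ∈ S, Relation.ReflTransGen R x q := by
      have r1 : R x y := by simp [hR]
      have r2 : R y z := by simp [hR]
      have r3 : R z w := by simp [hR]
      intro q hq
      rw [hS] at hq
      simp only [Finset.mem_insert, Finset.mem_singleton] at hq
      rcases hq with rfl | rfl | rfl | rfl
      · exact .refl
      · exact .single r1
      · exact .tail (.single r1) r2
      · exact .tail (.tail (.single r1) r2) r3
    intro p hp q hq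
    have hrev : ∀ a, Relation.ReflTransGen R x a → Relation.ReflTransGen R a x := fun a h => by
      induction h with
      | refl => exact .refl
      | tail _ h ih => exact .head (hsym _ _ h) ih
    exact (hrev p (hfrom p hp)).trans (hfrom q hq)

lemma base {S : Finset Pt} (hg : GenPos S) {p q r s : Pt} (hS : S = {p, q, r, s})
    (h1 : p ≠ q) (h2 : p ≠ r) (h3 : p ≠ s) (h4 : q ≠ r) (h5 : q ≠ s) (h6 : r ≠ s)
    (h : p ∈ convexHull ℝ ({q, r, s} : Set Pt)) :
    ∃ A B, IsPST S A ∧ IsPST S B ∧ Disjoint A B := by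
  have hp : p ∈ S := by simp [hS]
  have hq : q ∈ S := by simp [hS]
  have hr : r ∈ S := by simp [hS]
  have hs : s ∈ S := by simp [hS]
  refine ⟨{s(p, q), s(q, r), s(r, s)}, {s(q, s), s(s, p), s(p, r)}, ?_, ?_, ?_⟩
  · exact pst_path hg hS h1 h2 h3 h4 h5 h6 (nc_opp h (hg.cr_ne hr hs hp h6 h2.symm h3.symm))
  · refine pst_path hg ?_ h5 h1.symm h4 h3.symm h6.symm h2 ?_
    · rw [hS]; ext x; simp; tauto
    · refine (nc_opp ?_ (hg.cr_ne hq hs hp h5 h1.symm h3.symm)).symm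
      rwa [Set.insert_comm]
  · rw [Finset.disjoint_left]
    intro e he hf
    simp only [Finset.mem_insert, Finset.mem_singleton] at he hf
    rcases he with rfl | rfl | rfl <;> simp [*, Ne.symm] at hf

lemma carath {S : Finset Pt} (hg : GenPos S) {p : Pt} (hp : p ∈ S)
    (h : p ∈ convexHull ℝ ((S : Set Pt) \ {p})) :
    ∃ q ∈ S, ∃ r ∈ S, ∃ s ∈ S, p ≠ q ∧ p ≠ r ∧ p ≠ s ∧ q ≠ r ∧ q ≠ s ∧ r ≠ s ∧
      p ∈ convexHull ℝ ({q, r, s} : Set Pt) := by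
  rw [convexHull_eq_union] at h
  simp only [Set.mem_iUnion] at h
  obtain ⟨t, ht, hind, hpt⟩ := h
  have hmem : ∀ x ∈ t, x ∈ S ∧ p ≠ x := fun x hx => by
    have := ht hx
    simp only [Set.mem_sdiff, Finset.mem_coe, Set.mem_singleton_iff] at this
    exact ⟨this.1, fun h => this.2 h.symm⟩
  have hcard : t.card ≤ 3 := by
    have h1 := hind.card_le_finrank_succ.trans (Nat.succ_le_succ (Submodule.finrank_le _))
    have h3 : Module.finrank ℝ Pt = 2 := by simp [Pt]
    simp only [Fintype.card_coe] at h1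
    omega
  have hc2 : 2 < t.card := by
    by_contra hn
    have : t.card = 0 ∨ t.card = 1 ∨ t.card = 2 := by omega
    rcases this with h | h | h
    · rw [Finset.card_eq_zero] at h; subst h; simp at hpt
    · obtain ⟨q, rfl⟩ := Finset.card_eq_one.1 h
      simp at hpt
      exact (hmem q (by simp)).2 hpt
    · obtain ⟨q, r, hqr, rfl⟩ := Finset.card_eq_two.1 h
      have hq := hmem q (by simp)
      have hr := hmem r (by simp)
      simp only [Finset.coe_insert, Finset.coe_singleton, convexHull_pair] at hpt
      exact hg.cr_ne hq.1 hr.1 hp hqr hq.2.symm hr.2.symm (cr_seg hpt)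
  obtain ⟨q, r, s, h1, h2, h3, rfl⟩ := Finset.card_eq_three.1 (by omega : t.card = 3)
  have hq := hmem q (by simp)
  have hr := hmem r (by simp)
  have hs := hmem s (by simp)
  exact ⟨q, hq.1, r, hr.1, s, hs.1, hq.2, hr.2, hs.2, h1, h2, h3, by simpa using hpt⟩

lemma sub_tri {p x q r s : Pt} {a b c a' b' c' : ℝ} (hc : 0 < c) (hc' : 0 ≤ c')
    (h : a + b + c = 1) (h' : a' + b' + c' = 1) (hp : p = a • q + b • r + c • s)
    (hx : x = a' • q + b' • r + c' • s) (h1 : c' * a ≤ a' * c) (h2 : c' * b ≤ b' * c) :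
    x ∈ convexHull ℝ ({p, q, r} : Set Pt) := by
  have e1 : a' - c' / c * a = (a' * c - c' * a) / c := by field_simp
  have e2 : b' - c' / c * b = (b' * c - c' * b) / c := by field_simp
  have e3 : c' / c * c = c' := by field_simp
  refine tri_mem (a := c' / c) (b := a' - c' / c * a) (c := b' - c' / c * b) (by positivity)
    (e1 ▸ div_nonneg (by linarith) hc.le) (e2 ▸ div_nonneg (by linarith) hc.le) ?_ ?_
  · linear_combination h' - (c' / c) * h + e3
  · rw [hp, hx]
    simp only [smul_add, sub_smul, smul_smul, e3]
    abel

lemma del_s {S : Finset Pt} (hg : GenPos S) {p x q r s : Pt} (hp : p ∈ S) (hx : x ∈ S) (hq : q ∈ S)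
    (hr : r ∈ S) (hs : s ∈ S)
    (h4 : q ≠ r) (h5 : q ≠ s) (h6 : r ≠ s) (hps : p ≠ s) (hxp : x ≠ p) (hxq : x ≠ q) (hxr : x ≠ r)
    (hxs : x ≠ s) (hext : ∀ v ∈ S, v ∉ convexHull ℝ ((S : Set Pt) \ {v}) → v ∈ ({q, r, s} : Set Pt))
    (hxc : x ∈ convexHull ℝ ({p, q, r} : Set Pt)) :
    ∃ v ∈ S, v ∉ convexHull ℝ ((S : Set Pt) \ {v}) ∧ ¬ ConvexPos (S.erase v) := by
  refine ⟨s, hs, fun hn => ?_, fun hcp => ?_⟩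
  · have := km S {q, r} (by simp) (fun v hv hv' => by
      rcases hext v hv hv' with h | h | h
      · simp [h]
      · simp [h]
      · rw [Set.mem_singleton_iff] at h
        subst h
        exact absurd hn hv')
    have hs' := this hs
    rw [convexHull_pair] at hs'
    exact hg.cr_ne hq hr hs h4 h5 h6 (cr_seg hs')
  · refine hcp x (by simp [hx, hxs]) (convexHull_mono ?_ hxc)
    intro y hy
    rcases hy with rfl | rfl | rfl <;> simp [*, Ne.symm]

lemma main_step {S : Finset Pt} (hg : GenPos S) (hS : ¬ ConvexPos S) :
    (∃ v ∈ S, v ∉ convexHull ℝ ((S : Set Pt) \ {v}) ∧ ¬ ConvexPos (S.erase v)) ∨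
    ∃ A B, IsPST S A ∧ IsPST S B ∧ Disjoint A B := by
  unfold ConvexPos at hS
  push Not at hS
  obtain ⟨p, hp, hpc⟩ := hS
  obtain ⟨q, hq, r, hr, s, hs, h1, h2, h3, h4, h5, h6, hpt⟩ := carath hg hp hpc
  by_cases hext : ∀ v ∈ S, v ∉ convexHull ℝ ((S : Set Pt) \ {v}) → v ∈ ({q, r, s} : Set Pt)
  swap
  · left
    push Not at hext
    obtain ⟨v, hv, hvc, hvn⟩ := hext
    refine ⟨v, hv, hvc, fun hcp => ?_⟩
    have hpv : p ≠ v := fun h => hvc (h ▸ hpc)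
    simp only [Set.mem_insert_iff, Set.mem_singleton_iff, not_or] at hvn
    refine hcp p (by simp [hp, hpv]) (convexHull_mono ?_ hpt)
    intro y hy
    rcases hy with rfl | rfl | rfl <;> simp [*, Ne.symm]
  by_cases hS4 : S = {p, q, r, s}
  · exact Or.inr (base hg hS4 h1 h2 h3 h4 h5 h6 hpt)
  left
  have : ∃ x ∈ S, x ∉ ({p, q, r, s} : Finset Pt) := by
    by_contra hn
    push Not at hn
    apply hS4
    apply Finset.Subset.antisymm hn
    intro y hy
    simp only [Finset.mem_insert, Finset.mem_singleton] at hy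
    rcases hy with rfl | rfl | rfl | rfl <;> assumption
  obtain ⟨x, hx, hxn⟩ := this
  simp only [Finset.mem_insert, Finset.mem_singleton, not_or] at hxn
  obtain ⟨x1, x2, x3, x4⟩ := hxn
  have hxt := km S {q, r, s} (by simp) hext hx
  obtain ⟨a, b, c, ha, hb, hc, hs1, hpe⟩ := mem_tri hpt
  obtain ⟨a', b', c', ha', hb', hc', hs1', hxe⟩ := mem_tri hxt
  have pa : 0 < a := by
    refine lt_of_le_of_ne ha fun h => hg.cr_ne hr hs hp h6 h2.symm h3.symm ?_
    rw [hpe, cr_comb3 _ _ _ _ _ _ _ _ hs1, cr_left, cr_right, ← h]; ring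
  have pb : 0 < b := by
    refine lt_of_le_of_ne hb fun h => hg.cr_ne hq hs hp h5 h1.symm h3.symm ?_
    rw [hpe, cr_comb3 _ _ _ _ _ _ _ _ hs1, cr_left, cr_right, ← h]; ring
  have pc : 0 < c := by
    refine lt_of_le_of_ne hc fun h => hg.cr_ne hq hr hp h4 h1.symm h2.symm ?_
    rw [hpe, cr_comb3 _ _ _ _ _ _ _ _ hs1, cr_left, cr_right, ← h]; ring
  have hmin : (c' / c ≤ a' / a ∧ c' / c ≤ b' / b) ∨ (a' / a ≤ b' / b ∧ a' / a ≤ c' / c) ∨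
      (b' / b ≤ a' / a ∧ b' / b ≤ c' / c) := by
    rcases le_total (a' / a) (b' / b) with h | h <;> rcases le_total (a' / a) (c' / c) with h' | h' <;>
      rcases le_total (b' / b) (c' / c) with h'' | h'' <;> simp [*]
    all_goals first
      | exact Or.inl (h'.trans h)
      | exact Or.inl (h''.trans h)
  simp only [div_le_div_iff₀ pa pb, div_le_div_iff₀ pa pc, div_le_div_iff₀ pb pc,
    div_le_div_iff₀ pb pa, div_le_div_iff₀ pc pa, div_le_div_iff₀ pc pb] at hmin
  rcases hmin with ⟨m1, m2⟩ | ⟨m1, m2⟩ | ⟨m1, m2⟩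
  · exact del_s hg hp hx hq hr hs h4 h5 h6 h3 x1 x2 x3 x4 hext
      (sub_tri pc hc' hs1 hs1' hpe hxe m1 m2)
  · refine del_s hg hp hx hr hs hq h6 h4.symm h5.symm h1 x1 x3 x4 x2 (fun v hv hv' => ?_)
      (sub_tri (a := b) (b := c) (c := a) (a' := b') (b' := c') (c' := a') pa ha' (by linarith)
        (by linarith) (by rw [hpe]; abel) (by rw [hxe]; abel) m1 m2)
    have := hext v hv hv'
    simp only [Set.mem_insert_iff, Set.mem_singleton_iff] at this ⊢
    tauto
  · refine del_s hg hp hx hq hs hr h5 h4 h6.symm h2 x1 x2 x4 x3 (fun v hv hv' => ?_)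
      (sub_tri (a := a) (b := c) (c := b) (a' := a') (b' := c') (c' := b') pb hb' (by linarith)
        (by linarith) (by rw [hpe]; abel) (by rw [hxe]; abel) m1 m2)
    have := hext v hv hv'
    simp only [Set.mem_insert_iff, Set.mem_singleton_iff] at this ⊢
    tauto

lemma two_trees (n : ℕ) : ∀ S : Finset Pt, S.card = n → GenPos S → ¬ ConvexPos S →
    ∃ A B, IsPST S A ∧ IsPST S B ∧ Disjoint A B := by
  induction n with
  | zero =>
    intro S hS _ hc
    rw [Finset.card_eq_zero] at hS
    subst hS
    exact absurd (fun p hp => by simp at hp) hc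
  | succ n ih =>
    intro S hcard hg hc
    rcases main_step hg hc with ⟨v, hv, hve, hvc⟩ | h
    swap
    · exact h
    have hg' : GenPos (S.erase v) := fun p hp q hq r hr =>
      hg p (Finset.mem_of_mem_erase hp) q (Finset.mem_of_mem_erase hq) r (Finset.mem_of_mem_erase hr)
    obtain ⟨A, B, hA, hB, hAB⟩ := ih (S.erase v) (by rw [Finset.card_erase_of_mem hv]; omega) hg' hvc
    have hins : insert v (S.erase v) = S := Finset.insert_erase hv
    obtain ⟨p, hp, hpc⟩ : ∃ p ∈ S.erase v, p ∈ convexHull ℝ ((S.erase v : Set Pt) \ {p}) := by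
      unfold ConvexPos at hvc
      push Not at hvc
      exact hvc
    obtain ⟨q, hq, -, -, -, -, hpq, -⟩ := carath hg' hp hpc
    obtain ⟨a, ha, b, hb, ha', hb'⟩ := visible (v := v) ⟨p, hp⟩ (by rwa [hins])
      (by rwa [Finset.coe_erase])
    have hab : a ≠ b := by
      rintro rfl
      by_cases h : p = a
      · have := ha' q hq (fun h' => hpq (h.trans h'.symm))
        have := hb' q hq (fun h' => hpq (h.trans h'.symm))
        linarith
      · have := ha' p hp h
        have := hb' p hp h
        linarith
    have hvn : v ∉ S.erase v := by simp
    have i1 := pst_insert hA hvn ha 1 (fun s hs h => by simpa using ha' s hs h)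
    have i2 := pst_insert hB hvn hb (-1) (fun s hs h => by simpa using hb' s hs h)
    rw [hins] at i1 i2
    refine ⟨_, _, i1, i2, ?_⟩
    have nA : ∀ c, s(v, c) ∉ A := fun c h => hvn ((hA.1 _ h).2 v (by simp))
    have nB : ∀ c, s(v, c) ∉ B := fun c h => hvn ((hB.1 _ h).2 v (by simp))
    rw [Finset.disjoint_left]
    intro e he hf
    rcases Finset.mem_insert.1 he with rfl | he <;> rcases Finset.mem_insert.1 hf with h | hf
    · rw [Sym2.congr_right] at h
      exact hab h
    · exact nB a hf
    · exact nA b (h ▸ he)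
    · exact Finset.disjoint_left.1 hAB he hf

/-- on a point set in general but not convex position, any two edge-labeled
trees are connected by at most `3` simultaneous exchanges. -/
theorem stmt_15 :
    ∀ S : Finset Pt, GenPos S → ¬ ConvexPos S →
      ∀ T T' : LTree, IsLabeledPST S T → IsLabeledPST S T' →
        ReachesIn (LabSimExchange S) 3 T T' := by
  intro S hg hc T T' hT hT'
  exact finish S (two_trees _ S rfl hg hc) T T' hT hT'
end
end

section
/- Let S be a finite set of at least 3 points in the plane in general position, let v ∈ S, and let T₁, T₂ ∈ ℒ(S) be two edge-labeled spanning stars both centered at v such that every edge vw has different labels in T₁ and in T₂. Then every sequence of simultaneous exchanges (with labels transferred along each exchange) transforming T₁ into T₂ has length at least 3. -/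
open scoped Classical

noncomputable section

/-- two edge-labeled spanning stars with the same center, in which every edge
has two different labels, are at simultaneous exchange distance at least `3`. -/
theorem stmt_16 :
    ∀ S : Finset Pt, 3 ≤ S.card → GenPos S → ∀ v ∈ S,
      ∀ T₁ T₂ : LTree, IsLabeledPST S T₁ → IsLabeledPST S T₂ →
        T₁.1 = starAt S v → T₂.1 = starAt S v →
        (∀ e ∈ T₁.1, T₁.2 e ≠ T₂.2 e) →
        ∀ (k : ℕ) (f : ℕ → LTree), f 0 = T₁ → f k = T₂ →
          (∀ i < k, LabSimExchange S (f i) (f (i + 1))) → 3 ≤ k := by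
  intro S hS _ v hv T₁ T₂ h₁ h₂ e₁ e₂ hne k f h0 hk hstep
  have key : ∀ T : LTree, IsLabeledPST S T → ∃ e ∈ T.1, e ∈ starAt S v := by
    intro T hT
    obtain ⟨⟨hE, _, _, hconn⟩, _, _⟩ := hT
    obtain ⟨w, hw, hwv⟩ := Finset.exists_mem_ne (by omega : 1 < S.card) v
    rcases Relation.ReflTransGen.cases_head (hconn v hv w hw) with h | ⟨c, hc, _⟩
    · exact absurd h.symm hwv
    · refine ⟨_, hc, ?_⟩
      obtain ⟨hd, hp⟩ := hE _ hc
      have hcS : c ∈ S := hp c (Sym2.mem_mk_right v c)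
      have hvc : c ≠ v := by
        intro h
        exact hd (by simp [h])
      exact Finset.mem_image.mpr ⟨c, Finset.mem_erase.mpr ⟨hvc, hcS⟩, rfl⟩
  by_contra hlt
  have hk3 : k = 0 ∨ k = 1 ∨ k = 2 := by omega
  rcases hk3 with rfl | rfl | rfl
  · obtain ⟨e, he, _⟩ := key T₁ h₁
    exact hne e he (by rw [← h0, ← hk])
  · obtain ⟨e, he, hs⟩ := key T₁ h₁
    obtain ⟨_, _, π, _, _, hc⟩ := hstep 0 (by norm_num)
    rw [zero_add, h0, hk] at hc
    exact hne e he (hc e (Finset.mem_inter.mpr ⟨he, e₂ ▸ hs⟩)).symm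
  · obtain ⟨_, hT, π, _, _, hc⟩ := hstep 0 (by norm_num)
    obtain ⟨_, _, π', _, _, hc'⟩ := hstep 1 (by norm_num)
    rw [zero_add] at hT
    obtain ⟨e, he, hs⟩ := key _ hT
    rw [zero_add, h0] at hc
    rw [one_add_one_eq_two, hk] at hc'
    have a := hc e (Finset.mem_inter.mpr ⟨e₁ ▸ hs, he⟩)
    have b := hc' e (Finset.mem_inter.mpr ⟨he, e₂ ▸ hs⟩)
    exact hne e (e₁ ▸ hs) (a.symm.trans b.symm)
end
end
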